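/- Let K be a field and S = K[y_1,…,y_s] a ℤ^d-graded polynomial ring with deg(y_i) = v_i ∈ ℤ^d, where V = (v_1,…,v_s) is a d×s integer matrix. Let H be a finitely generated subsemigroup of ℕV = {V·a : a ∈ ℕ^s}. If H is a normal affine semigroup, i.e. H = L ∩ C for some sublattice L ⊆ ℤ^d and some finitely generated rational cone C ⊆ ℚ^d, then the subring S^{(H)} = ⊕_{v∈H} S_v is Noetherian; equivalently, the semigroup {a ∈ ℕ^s : V·a ∈ H} is finitely generated. -/

import Mathlib

/-!
If `H` is generated by `h₁, …, hₙ`, then `V·a ∈ H` means that `V·a = ∑ μᵢ hᵢ` for some `μ ∈ ℕ^n`.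
Hence `fiberSubmonoid V H` is the projection to `ℕ^s` of the submonoid of `ℕ^s × ℕ^n` on which the
homomorphisms `(a, μ) ↦ V·a` and `(a, μ) ↦ ∑ μᵢ hᵢ` agree. That submonoid is finitely generated by
Gordan's lemma (`AddSubmonoid.fg_eqLocusM`: by Dickson's lemma it has finitely many minimal nonzero
elements, and these generate it because `ℤ^d` is cancellative), and so is its projection.
-/

/-- `V ⋅ a ∈ ℤ^d` for an exponent vector `a ∈ ℕ^s`. -/
def VdotN {d s : ℕ} (V : Matrix (Fin d) (Fin s) ℤ) (a : Fin s → ℕ) : Fin d → ℤ :=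
  V.mulVec fun j => (a j : ℤ)

/-- The semigroup `H̃ = {a ∈ ℕ^s : V·a ∈ H}`, whose finite generation is equivalent to the
Noetherianity of the subring `S^{(H)} = ⊕_{v ∈ H} S_v` of the `ℤ^d`-graded polynomial ring
`S = K[y_1,…,y_s]` with `deg(y_i)` the `i`-th column of `V`. -/
def fiberSubmonoid {d s : ℕ} (V : Matrix (Fin d) (Fin s) ℤ) (H : AddSubmonoid (Fin d → ℤ)) :
    AddSubmonoid (Fin s → ℕ) where
  carrier := {a | VdotN V a ∈ H}
  zero_mem' := by
    have h0 : VdotN V (0 : Fin s → ℕ) = 0 := by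
      have : (fun j => ((0 : Fin s → ℕ) j : ℤ)) = (0 : Fin s → ℤ) := by funext j; simp
      rw [VdotN, this, Matrix.mulVec_zero]
    simp only [Set.mem_setOf_eq, h0]
    exact H.zero_mem
  add_mem' := by
    intro a b ha hb
    have h : VdotN V (a + b) = VdotN V a + VdotN V b := by
      have : (fun j => ((a + b) j : ℤ)) = (fun j => (a j : ℤ)) + fun j => (b j : ℤ) := by
        funext j; simp
      simp only [VdotN, this, Matrix.mulVec_add]
    simp only [Set.mem_setOf_eq, h]
    exact H.add_mem ha hb

/-- The map `a ↦ V·a` as a homomorphism of additive monoids. -/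
def VdotNHom {d s : ℕ} (V : Matrix (Fin d) (Fin s) ℤ) : (Fin s → ℕ) →+ (Fin d → ℤ) where
  toFun := VdotN V
  map_zero' := by
    ext i
    simp [VdotN, Matrix.mulVec, dotProduct]
  map_add' a b := by
    ext i
    simp [VdotN, Matrix.mulVec, dotProduct, mul_add, Finset.sum_add_distrib]

/-- The preimage of a finitely generated submonoid under a homomorphism from `ℕ^s` to a
cancellative commutative monoid is finitely generated. -/
lemma fg_comap_of_fg {s : ℕ} {M : Type*} [AddCommMonoid M] [IsCancelAdd M]
    (f : (Fin s → ℕ) →+ M) {H : AddSubmonoid M} (hH : H.FG) : (H.comap f).FG := by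
  obtain ⟨n, g, rfl⟩ := AddSubmonoid.fg_iff_exists_fin_addMonoidHom.1 hH
  have key := (AddSubmonoid.fg_eqLocusM
    (f.comp (AddMonoidHom.fst (Fin s → ℕ) (Fin n → ℕ)))
    (g.comp (AddMonoidHom.snd (Fin s → ℕ) (Fin n → ℕ)))).map
      (AddMonoidHom.fst (Fin s → ℕ) (Fin n → ℕ))
  convert key using 1
  ext a
  constructor
  · rintro ⟨μ, hμ⟩
    exact ⟨(a, μ), hμ.symm, rfl⟩
  · rintro ⟨⟨b, μ⟩, hμ, rfl⟩
    exact ⟨μ, Eq.symm hμ⟩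

/-- Proposition: normality of `H` implies Noetherianity of `S^{(H)}`.
Let `V` be a `d×s` integer matrix and `H` a finitely generated subsemigroup of
`ℕV = {V·a : a ∈ ℕ^s}`. If `H` is a normal affine semigroup, i.e. `H = L ∩ C` for a
sublattice `L ⊆ ℤ^d` and a finitely generated rational cone `C ⊆ ℚ^d`, then the semigroup
`H̃ = {a ∈ ℕ^s : V·a ∈ H}` is finitely generated (equivalently, `S^{(H)}` is Noetherian). -/
theorem fiberSubmonoid_fg_of_normal {d s : ℕ} (V : Matrix (Fin d) (Fin s) ℤ)
    (H : AddSubmonoid (Fin d → ℤ)) (hHfg : H.FG)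
    (hHsub : ∀ x ∈ H, ∃ a : Fin s → ℕ, VdotN V a = x)
    (hnormal : ∃ (L : AddSubgroup (Fin d → ℤ)) (n : ℕ) (c : Fin n → (Fin d → ℚ)),
      ∀ x : Fin d → ℤ, x ∈ H ↔ (x ∈ L ∧
        ∃ lam : Fin n → ℚ, (∀ i, 0 ≤ lam i) ∧ (fun i => (x i : ℚ)) = ∑ i, lam i • c i)) :
    (fiberSubmonoid V H).FG := by
  exact fg_comap_of_fg (VdotNHom V) hHfg
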